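/- Let Φ ∈ ℝ^{m×n} have restricted isometry constant δ_K < 1 of order K, let x ∈ ℝ^n be K-sparse with support T, |T| = K, and let S ⊊ T be a proper subset such that Φ_S has full column rank. Then ‖Φᵀ_{T\S} P⊥_S Φ x‖₂ ≥ (1 − δ_K)·‖x_{T\S}‖₂, where Φ_A denotes the submatrix of Φ with columns indexed by A, P_S = Φ_S Φ_S^† is the orthogonal projection onto the column span of Φ_S, P⊥_S = I − P_S, and x_{T\S} is the restriction of x to the indices in T\S. -/

import Mathlib

noncomputable section
open Finset

/-- `Vec n` is `ℝ^n` with the Euclidean (ℓ²) norm. -/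
abbrev Vec (n : ℕ) := EuclideanSpace ℝ (Fin n)

/-- The standard inner product `⟨u, v⟩ = ∑ i, u i * v i`. -/
def dot {n : ℕ} (u v : Vec n) : ℝ := ∑ i, u i * v i

/-- The `j`-th column of a matrix, as a Euclidean vector. -/
def col {m n : ℕ} (Φ : Matrix (Fin m) (Fin n) ℝ) (j : Fin n) : Vec m :=
  WithLp.toLp 2 fun i => Φ i j

/-- Matrix-vector multiplication `Φ x`, valued in Euclidean space. -/
def mulVec' {m n : ℕ} (Φ : Matrix (Fin m) (Fin n) ℝ) (x : Vec n) : Vec m :=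
  WithLp.toLp 2 fun i => ∑ j, Φ i j * x j

/-- The support of a vector, as a `Finset`. -/
def suppF {n : ℕ} (x : Vec n) : Finset (Fin n) :=
  Finset.univ.filter fun i => x i ≠ 0

/-- Restriction of a vector to an index set (zero outside the set). -/
def restrict {n : ℕ} (x : Vec n) (S : Finset (Fin n)) : Vec n :=
  WithLp.toLp 2 fun i => if i ∈ S then x i else 0

/-- `RIPConst Φ L δ` : δ is the restricted isometry constant of `Φ` of order `L`,
i.e. the smallest `c ≥ 0` such that `(1-c)‖u‖² ≤ ‖Φu‖² ≤ (1+c)‖u‖²` for all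
`L`-sparse `u`. -/
def RIPConst {m n : ℕ} (Φ : Matrix (Fin m) (Fin n) ℝ) (L : ℕ) (δ : ℝ) : Prop :=
  IsLeast {c : ℝ | 0 ≤ c ∧ ∀ u : Vec n, (suppF u).card ≤ L →
    (1 - c) * ‖u‖ ^ 2 ≤ ‖mulVec' Φ u‖ ^ 2 ∧ ‖mulVec' Φ u‖ ^ 2 ≤ (1 + c) * ‖u‖ ^ 2} δ

/-- Signal-to-noise ratio `‖Φx‖²/‖v‖²`. -/
def SNR {m n : ℕ} (Φ : Matrix (Fin m) (Fin n) ℝ) (x : Vec n) (v : Vec m) : ℝ :=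
  ‖mulVec' Φ x‖ ^ 2 / ‖v‖ ^ 2

/-- A run of `N` iterations of Orthogonal Matching Pursuit on data `(Φ, y)`:
`idx (k+1) = t^{k+1}` is the index selected at iteration `k+1`, `sets k = T^k`,
`est k = x^k` and `res k = r^k`. -/
structure OMPRun {m n : ℕ} (Φ : Matrix (Fin m) (Fin n) ℝ) (y : Vec m) (N : ℕ) where
  idx : ℕ → Fin n
  sets : ℕ → Finset (Fin n)
  est : ℕ → Vec n
  res : ℕ → Vec m
  sets_zero : sets 0 = ∅
  est_zero : est 0 = 0
  res_zero : res 0 = y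
  idx_not_mem : ∀ k < N, idx (k + 1) ∉ sets k
  idx_max : ∀ k < N, ∀ i : Fin n, i ∉ sets k →
    |dot (col Φ i) (res k)| ≤ |dot (col Φ (idx (k + 1))) (res k)|
  sets_succ : ∀ k < N, sets (k + 1) = insert (idx (k + 1)) (sets k)
  est_supp : ∀ k < N, suppF (est (k + 1)) ⊆ sets (k + 1)
  est_min : ∀ k < N, ∀ u : Vec n, suppF u ⊆ sets (k + 1) →
    ‖y - mulVec' Φ (est (k + 1))‖ ≤ ‖y - mulVec' Φ u‖
  res_succ : ∀ k < N, res (k + 1) = y - mulVec' Φ (est (k + 1))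

/-- The vector `Φᵀ w` restricted to an index set `A` (the vector of correlations
`⟨φ_i, w⟩` for `i ∈ A`, zero outside `A`), as a Euclidean vector. -/
def colDots {m n : ℕ} (Φ : Matrix (Fin m) (Fin n) ℝ) (A : Finset (Fin n)) (w : Vec m) : Vec n :=
  WithLp.toLp 2 fun i => if i ∈ A then dot (col Φ i) w else 0

/-- The vector `Φᵀ w` of all column correlations, as a plain function (so `‖·‖`
is the sup/ℓ∞ norm). -/
def dualVec {m n : ℕ} (Φ : Matrix (Fin m) (Fin n) ℝ) (w : Vec m) : Fin n → ℝ :=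
  fun i => dot (col Φ i) w

/-- `P⊥_S w` : the projection of `w` onto the orthogonal complement of the span
of the columns of `Φ` indexed by `S`. -/
def perpProj {m n : ℕ} (Φ : Matrix (Fin m) (Fin n) ℝ) (S : Finset (Fin n)) (w : Vec m) : Vec m :=
  w - (Submodule.orthogonalProjectionOnto (Submodule.span ℝ (col Φ '' (S : Set (Fin n)))) w : Vec m)

/-- The `j`-th largest value (1-indexed) among `{|x i| : i ∈ Γ}` (with
multiplicities); `0` if `j > |Γ|` or `j = 0`. -/
def kthLargest {n : ℕ} (x : Vec n) (Γ : Finset (Fin n)) (j : ℕ) : ℝ :=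
  if 1 ≤ j ∧ j ≤ Γ.card then
    (Multiset.sort (Γ.val.map fun i => |x i|) (· ≤ ·)).getD (Γ.card - j) 0
  else 0

/-!
For `u` supported off `S`, projecting away the columns in `S` turns `Φ u` into `Φ (u - z)` with `z`
supported in `S`. Since `‖u - z‖ ≥ ‖u‖`, the lower restricted isometry bound survives the
projection: `(1 - δ) ‖u‖² ≤ ‖P⊥_S Φ u‖²`. The right-hand side equals `⟨u, Φᵀ P⊥_S Φ u⟩`, so
Cauchy–Schwarz gives the estimate for `u = x_{T \ S}`, and `P⊥_S Φ x = P⊥_S Φ x_{T \ S}`.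
-/

section Support

variable {n : ℕ}

lemma suppF_subset_iff {x : Vec n} {A : Finset (Fin n)} : suppF x ⊆ A ↔ ∀ i ∉ A, x i = 0 := by
  simp only [subset_iff, suppF, mem_filter_univ]
  exact forall_congr' fun _ ↦ not_imp_comm

lemma suppF_sub_subset {x y : Vec n} {A B : Finset (Fin n)} (hx : suppF x ⊆ A)
    (hy : suppF y ⊆ B) : suppF (x - y) ⊆ A ∪ B := by
  rw [suppF_subset_iff] at hx hy ⊢
  intro i hi
  rw [notMem_union] at hi
  simp [hx i hi.1, hy i hi.2]

lemma suppF_restrict_subset (x : Vec n) (A : Finset (Fin n)) : suppF (restrict x A) ⊆ A :=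
  suppF_subset_iff.2 fun _ hi ↦ if_neg hi

lemma suppF_sub_restrict_sdiff_subset {x : Vec n} {S T : Finset (Fin n)} (hx : suppF x ⊆ S ∪ T) :
    suppF (x - restrict x (T \ S)) ⊆ S := by
  rw [suppF_subset_iff] at hx ⊢
  intro i hiS
  by_cases hiT : i ∈ T
  · simp [_root_.restrict, hiT, hiS]
  · simp [_root_.restrict, hiT, hx i (by simp [hiS, hiT])]

lemma norm_le_norm_sub_of_disjoint_suppF {u z : Vec n} (h : Disjoint (suppF u) (suppF z)) :
    ‖u‖ ≤ ‖u - z‖ := by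
  have horth : inner ℝ u z = 0 := by
    rw [PiLp.inner_apply]
    refine sum_eq_zero fun i _ ↦ ?_
    by_cases hi : i ∈ suppF u
    · simp [suppF_subset_iff.1 Subset.rfl i (disjoint_left.1 h hi)]
    · simp [suppF_subset_iff.1 Subset.rfl i hi]
  have hpyth := norm_sub_sq_eq_norm_sq_add_norm_sq_real horth
  nlinarith [norm_nonneg u, norm_nonneg (u - z), mul_self_nonneg ‖z‖]

end Support

section Columns

variable {m n : ℕ} (Φ : Matrix (Fin m) (Fin n) ℝ)

lemma dot_eq_inner (u v : Vec n) : dot u v = inner ℝ u v := by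
  simp [dot, PiLp.inner_apply, mul_comm]

lemma mulVec'_sub (x y : Vec n) : mulVec' Φ (x - y) = mulVec' Φ x - mulVec' Φ y := by
  ext i
  simp [mulVec', mul_sub]

lemma mulVec'_eq_sum {x : Vec n} {A : Finset (Fin n)} (hx : suppF x ⊆ A) :
    mulVec' Φ x = ∑ j ∈ A, x j • col Φ j := by
  rw [suppF_subset_iff] at hx
  rw [sum_subset (subset_univ A) fun j _ hj ↦ by rw [hx j hj, zero_smul]]
  ext i
  simp [mulVec', col, mul_comm]

lemma mem_span_col_iff {S : Finset (Fin n)} {p : Vec m} :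
    p ∈ Submodule.span ℝ (col Φ '' (S : Set (Fin n))) ↔
      ∃ z : Vec n, suppF z ⊆ S ∧ mulVec' Φ z = p := by
  rw [Submodule.mem_span_image_finset_iff_exists_fun']
  constructor
  · rintro ⟨a, rfl⟩
    have hsupp := suppF_restrict_subset (WithLp.toLp 2 a) S
    refine ⟨restrict (WithLp.toLp 2 a) S, hsupp, ?_⟩
    rw [mulVec'_eq_sum Φ hsupp]
    exact sum_congr rfl fun j hj ↦ by simp [_root_.restrict, hj]
  · rintro ⟨z, hz, rfl⟩
    exact ⟨z, (mulVec'_eq_sum Φ hz).symm⟩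

lemma inner_mulVec'_eq_inner_colDots {u : Vec n} {A : Finset (Fin n)} (hu : suppF u ⊆ A)
    (w : Vec m) : inner ℝ (mulVec' Φ u) w = inner ℝ u (colDots Φ A w) := by
  simp only [mulVec'_eq_sum Φ hu, sum_inner, real_inner_smul_left, ← dot_eq_inner]
  simp [dot, colDots]

end Columns

section Projection

variable {m n : ℕ} (Φ : Matrix (Fin m) (Fin n) ℝ)

lemma perpProj_eq_starProjection (S : Finset (Fin n)) (w : Vec m) :
    perpProj Φ S w = (Submodule.span ℝ (col Φ '' (S : Set (Fin n))))ᗮ.starProjection w :=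
  (Submodule.starProjection_orthogonal_val w).symm

lemma norm_perpProj_sq (S : Finset (Fin n)) (w : Vec m) :
    ‖perpProj Φ S w‖ ^ 2 = inner ℝ w (perpProj Φ S w) := by
  rw [perpProj_eq_starProjection, real_inner_comm]
  exact (Submodule.re_inner_starProjection_eq_normSq (𝕜 := ℝ) _ w).symm

lemma exists_perpProj_mulVec'_eq (S : Finset (Fin n)) (u : Vec n) :
    ∃ z, suppF z ⊆ S ∧ perpProj Φ S (mulVec' Φ u) = mulVec' Φ (u - z) := by
  obtain ⟨z, hz, hproj⟩ := (mem_span_col_iff Φ).1 (Submodule.coe_mem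
    ((Submodule.span ℝ (col Φ '' (S : Set (Fin n)))).orthogonalProjectionOnto (mulVec' Φ u)))
  exact ⟨z, hz, by rw [mulVec'_sub, hproj, perpProj]⟩

lemma perpProj_mulVec'_congr {S : Finset (Fin n)} {x y : Vec n} (h : suppF (x - y) ⊆ S) :
    perpProj Φ S (mulVec' Φ x) = perpProj Φ S (mulVec' Φ y) := by
  rw [← sub_eq_zero, perpProj_eq_starProjection, perpProj_eq_starProjection, ← map_sub,
    ← mulVec'_sub]
  exact Submodule.starProjection_orthogonal_apply_eq_zero ((mem_span_col_iff Φ).2 ⟨_, h, rfl⟩)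

end Projection

section LowerBound

variable {m n : ℕ} {Φ : Matrix (Fin m) (Fin n) ℝ} {c : ℝ} {S A : Finset (Fin n)} {u : Vec n}

lemma mul_norm_sq_le_norm_perpProj_sq (hc : 0 ≤ c)
    (hΦ : ∀ v : Vec n, suppF v ⊆ S ∪ A → c * ‖v‖ ^ 2 ≤ ‖mulVec' Φ v‖ ^ 2)
    (hSA : Disjoint S A) (hu : suppF u ⊆ A) :
    c * ‖u‖ ^ 2 ≤ ‖perpProj Φ S (mulVec' Φ u)‖ ^ 2 := by
  obtain ⟨z, hz, hperp⟩ := exists_perpProj_mulVec'_eq Φ S u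
  have hnorm : ‖u‖ ≤ ‖u - z‖ := norm_le_norm_sub_of_disjoint_suppF (hSA.symm.mono hu hz)
  calc c * ‖u‖ ^ 2 ≤ c * ‖u - z‖ ^ 2 := by gcongr
    _ ≤ ‖mulVec' Φ (u - z)‖ ^ 2 := hΦ _ (union_comm A S ▸ suppF_sub_subset hu hz)
    _ = ‖perpProj Φ S (mulVec' Φ u)‖ ^ 2 := by rw [hperp]

lemma mul_norm_le_norm_colDots_perpProj (hc : 0 ≤ c)
    (hΦ : ∀ v : Vec n, suppF v ⊆ S ∪ A → c * ‖v‖ ^ 2 ≤ ‖mulVec' Φ v‖ ^ 2)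
    (hSA : Disjoint S A) (hu : suppF u ⊆ A) :
    c * ‖u‖ ≤ ‖colDots Φ A (perpProj Φ S (mulVec' Φ u))‖ := by
  rcases (norm_nonneg u).eq_or_lt with hzero | hpos
  · rw [← hzero, mul_zero]
    exact norm_nonneg _
  · set r := perpProj Φ S (mulVec' Φ u)
    refine le_of_mul_le_mul_left ?_ hpos
    calc ‖u‖ * (c * ‖u‖) = c * ‖u‖ ^ 2 := by ring
      _ ≤ ‖r‖ ^ 2 := mul_norm_sq_le_norm_perpProj_sq hc hΦ hSA hu
      _ = inner ℝ (mulVec' Φ u) r := norm_perpProj_sq Φ S _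
      _ = inner ℝ u (colDots Φ A r) := inner_mulVec'_eq_inner_colDots Φ hu r
      _ ≤ ‖u‖ * ‖colDots Φ A r‖ := real_inner_le_norm _ _

end LowerBound

theorem stmt16_general {m n : ℕ} (Φ : Matrix (Fin m) (Fin n) ℝ) {c : ℝ} (hc : 0 ≤ c)
    (x : Vec n) (T S : Finset (Fin n)) (hx : suppF x ⊆ S ∪ T)
    (hΦ : ∀ v : Vec n, suppF v ⊆ S ∪ T → c * ‖v‖ ^ 2 ≤ ‖mulVec' Φ v‖ ^ 2) :
    c * ‖restrict x (T \ S)‖ ≤ ‖colDots Φ (T \ S) (perpProj Φ S (mulVec' Φ x))‖ := by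
  rw [perpProj_mulVec'_congr Φ (suppF_sub_restrict_sdiff_subset hx)]
  rw [← union_sdiff_self_eq_union] at hΦ
  exact mul_norm_le_norm_colDots_perpProj hc hΦ disjoint_sdiff (suppF_restrict_subset x _)

/-- `‖Φᵀ_{T\S} P⊥_S Φx‖ ≥ (1 − δ_K)‖x_{T\S}‖` for `S ⊊ T` with
`Φ_S` of full column rank. -/
theorem stmt16 {m n K : ℕ} (Φ : Matrix (Fin m) (Fin n) ℝ) (δ : ℝ)
    (x : Vec n) (T S : Finset (Fin n))
    (hsupp : suppF x = T) (hcard : T.card = K)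
    (hRIP : RIPConst Φ K δ) (hδ : δ < 1)
    (hS : S ⊂ T)
    (hrank : LinearIndependent ℝ (fun j : {i // i ∈ S} => col Φ (j : Fin n))) :
    (1 - δ) * ‖restrict x (T \ S)‖ ≤
      ‖colDots Φ (T \ S) (perpProj Φ S (mulVec' Φ x))‖ := by
  rw [← union_eq_right.2 hS.subset] at hsupp hcard
  exact stmt16_general Φ (sub_nonneg.2 hδ.le) x T S hsupp.subset fun v hv ↦
    (hRIP.1.2 v (hcard ▸ card_le_card hv)).1

end
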